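/- arXiv:1811.08930 — 3 statements merged into one kernel-verified Lean document; each statement's English description precedes it below -/
import Mathlib

section
/- Let p be a prime, Γ a subgroup of F_p^*, n ≥ 2, and let μ_1, …, μ_{n−1} ∈ F_p^* be pairwise distinct nonzero elements of F_p. If 2^{2n} < |Γ| < (n+1)^{-2n/(2n+1)} · p^{1 − 1/(2n+1)}, then |Γ ∩ (Γ + μ_1) ∩ … ∩ (Γ + μ_{n−1})| ≤ 4n(n+1) · |Γ|^{1/2 + 1/(2n)}. -/
/-!
Stepanov's method. Write `t` for the order of `Γ` and `ν i` for the shifts, `0` included. At a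
point `x` of the intersection `(x - ν i) ^ t = 1` for all `i`, so every product
`G j = ∏ i, (X - ν i) ^ (t * e j i)` takes the value `1` there, and `∑ j, P j * G j` vanishes to
order `D` at all these points at once as soon as the low-degree polynomials `P j` satisfy `D`
polynomial identities, which linear algebra provides. Comparing the number of zeros with the degree
gives the bound, once the sum is known to be nonzero.

The sum is nonzero because the `G j` are independent over the polynomials of low degree. In a
vanishing sum the terms of lowest order at a node `ν i` add up to a multiple of `(X - ν i) ^ t`, so
by Cramer's rule a high power of `X - ν i` divides their Wronskian. Up to factors prime to
`X - ν i` the Wronskian has low degree, so it vanishes; but the Wronskian of linearly independent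
polynomials of degree less than `p` does not.

All this works over a field in which the natural numbers below `p` are distinct, that is, one of
characteristic zero or at least `p`.
-/

open Polynomial

section Wronskian

/-- The Wronskian matrix of the polynomials `f j`: its row `r` consists of their `r`-th
derivatives. -/
noncomputable def wronskianMatrix {R : Type*} [CommRing R] {k : ℕ} (f : Fin k → R[X]) :
    Matrix (Fin k) (Fin k) R[X] :=
  Matrix.of fun r j => derivative^[r] (f j)

/-- The indicial polynomial `∑ a_r s (s - 1) ⋯ (s - r + 1)` of the Euler operator
`∑ a_r X ^ r ∂ ^ r`: its value at `s = n` is the eigenvalue of that operator on `X ^ n`. -/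
noncomputable def indicialPoly {R : Type*} [CommRing R] {k : ℕ} (a : Fin k → R) : R[X] :=
  ∑ r, C (a r) * descPochhammer R r

section IsDomain

variable {R : Type*} [CommRing R] [IsDomain R] {k : ℕ}

lemma indicialPoly_ne_zero {a : Fin k → R} (ha : a ≠ 0) : indicialPoly a ≠ 0 := by
  let S : Polynomial.Sequence R := ⟨fun r => descPochhammer R r, fun r => by
    rw [degree_eq_natDegree (monic_descPochhammer R r).ne_zero, descPochhammer_natDegree]⟩
  have hS := Fintype.linearIndependent_iff.mp <|
    S.linearIndependent.comp (fun r : Fin k => (r : ℕ)) Fin.val_injective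
  contrapose! ha
  refine funext <| hS a ?_
  simp_rw [smul_eq_C_mul]
  exact ha

lemma natDegree_indicialPoly_lt {a : Fin k → R} (ha : a ≠ 0) :
    (indicialPoly a).natDegree < k := by
  obtain ⟨r₀, -⟩ := Function.ne_iff.mp ha
  have : (indicialPoly a).natDegree ≤ k - 1 := natDegree_sum_le_of_forall_le _ _ fun r _ => by
    refine (natDegree_C_mul_le _ _).trans ?_
    rw [descPochhammer_natDegree]
    omega
  exact this.trans_lt (Nat.sub_one_lt_of_lt r₀.pos)

/-- Compare the coefficients of `X ^ (h + natDegree g)` in the differential equation. -/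
lemma isRoot_indicialPoly_natDegree {c : Fin k → R[X]} {h : ℕ}
    (hc : ∀ r, (c r).natDegree ≤ h + r) {g : R[X]} (hg : g ≠ 0)
    (hcg : ∑ r, c r * derivative^[r] g = 0) :
    (indicialPoly fun r => (c r).coeff (h + r)).IsRoot (g.natDegree : R) := by
  have coeff_term (r : Fin k) : (c r * derivative^[r] g).coeff (h + g.natDegree) =
      (c r).coeff (h + r) * (g.natDegree.descFactorial r : R) * g.leadingCoeff := by
    rcases le_or_gt (r : ℕ) g.natDegree with hr | hr
    · have hsplit : h + g.natDegree = (h + r) + (g.natDegree - r) := by omega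
      rw [hsplit, coeff_mul_add_eq_of_natDegree_le (hc r) (natDegree_iterate_derivative g r),
        coeff_iterate_derivative, Nat.sub_add_cancel hr, nsmul_eq_mul, leadingCoeff, mul_assoc]
    · simp [iterate_derivative_eq_zero hr, Nat.descFactorial_of_lt hr]
  have hcoeff := congrArg (coeff · (h + g.natDegree)) hcg
  simp only [finsetSum_coeff, coeff_term, coeff_zero, ← Finset.sum_mul] at hcoeff
  simpa [indicialPoly, eval_finsetSum, descPochhammer_eval_eq_descFactorial] using
    (mul_eq_zero.mp hcoeff).resolve_right (leadingCoeff_ne_zero.mpr hg)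

/-- The factor `X ^ k` keeps the weight `h` of the operator nonnegative. -/
lemma exists_natDegree_X_pow_mul_le {c : Fin k → R[X]} (hc : c ≠ 0) :
    ∃ h : ℕ, (∀ r : Fin k, (X ^ k * c r).natDegree ≤ h + r) ∧
      (fun r : Fin k => (X ^ k * c r).coeff (h + r)) ≠ 0 := by
  classical
  obtain ⟨r₁, hr₁⟩ := Function.ne_iff.mp hc
  obtain ⟨r₀, hr₀, hmax⟩ := (Finset.univ.filter fun r : Fin k => c r ≠ 0).exists_max_image
    (fun r : Fin k => (c r).natDegree + (k - r)) ⟨r₁, by simpa using hr₁⟩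
  simp only [Finset.mem_filter, Finset.mem_univ, true_and] at hr₀ hmax
  refine ⟨(c r₀).natDegree + (k - r₀), fun r => ?_, fun h0 => ?_⟩
  · by_cases hr : c r = 0
    · simp [hr]
    · have := hmax r hr
      rw [natDegree_X_pow_mul k hr]
      omega
  · have htop := congrFun h0 r₀
    have hexp : (c r₀).natDegree + (k - r₀) + r₀ = (c r₀).natDegree + k := by omega
    simp only [Pi.zero_apply, hexp, coeff_X_pow_mul] at htop
    exact leadingCoeff_ne_zero.mpr hr₀ htop

end IsDomain

variable {F : Type*} [Field F]

lemma exists_mem_span_natDegree_notMem {κ : Type*} [Fintype κ] {f : κ → F[X]}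
    (hf : LinearIndependent F f) {S : Finset ℕ} (hS : S.card < Fintype.card κ) :
    ∃ g ∈ Submodule.span F (Set.range f), g ≠ 0 ∧ g.natDegree ∉ S := by
  let V := Submodule.span F (Set.range f)
  have : FiniteDimensional F V := .span_of_finite F (Set.finite_range f)
  let coeffs : V →ₗ[F] S → F := LinearMap.pi fun s => lcoeff F s ∘ₗ V.subtype
  have hker : LinearMap.ker coeffs ≠ ⊥ := LinearMap.ker_ne_bot_of_finrank_lt <| by
    simpa [V, finrank_span_eq_card hf] using hS
  obtain ⟨g, hg, hg0⟩ := (Submodule.ne_bot_iff _).mp hker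
  have hg0' : (g : F[X]) ≠ 0 := by simpa using hg0
  exact ⟨g, g.2, hg0', fun hmem =>
    leadingCoeff_ne_zero.mpr hg0' (congrFun (LinearMap.mem_ker.mp hg) ⟨_, hmem⟩)⟩

lemma card_le_natDegree_of_isRoot_natCast {p : ℕ} (hp : (Set.Iio p).InjOn (Nat.cast : ℕ → F))
    {f : F[X]} (hf : f ≠ 0) {S : Finset ℕ} (hSp : ∀ n ∈ S, n < p)
    (hSf : ∀ n ∈ S, f.IsRoot (n : F)) : S.card ≤ f.natDegree := by
  classical
  rw [← Finset.card_image_of_injOn (hp.mono hSp)]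
  refine card_le_degree_of_subset_roots (Multiset.subset_iff.mpr fun x hx => ?_)
  obtain ⟨n, hn, rfl⟩ := Finset.mem_image.mp hx
  exact (mem_roots hf).mpr (hSf n hn)

lemma natDegree_lt_of_mem_span {κ : Type*} {f : κ → F[X]} {p : ℕ}
    (hf : ∀ j, (f j).natDegree < p) {g : F[X]} (hg : g ∈ Submodule.span F (Set.range f))
    (hg0 : g ≠ 0) : g.natDegree < p := by
  have hle : Submodule.span F (Set.range f) ≤ degreeLT F p := by
    rw [Submodule.span_le, Set.range_subset_iff]
    exact fun j => mem_degreeLT.mpr <| degree_le_natDegree.trans_lt <| by exact_mod_cast hf j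
  exact (natDegree_lt_iff_degree_lt hg0).mpr (mem_degreeLT.mp (hle hg))

lemma sum_mul_iterate_derivative_eq_zero_of_mem_span {κ : Type*} {k : ℕ} {f : κ → F[X]}
    {c : Fin k → F[X]} (hc : ∀ j, ∑ r, c r * derivative^[r] (f j) = 0) {g : F[X]}
    (hg : g ∈ Submodule.span F (Set.range f)) : ∑ r, c r * derivative^[r] g = 0 := by
  let L : F[X] →ₗ[F] F[X] := ∑ r, LinearMap.mulLeft F (c r) ∘ₗ derivative ^ (r : ℕ)
  have hL (g : F[X]) : L g = ∑ r, c r * derivative^[r] g := by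
    simp [L, Module.End.pow_apply]
  have hle : Submodule.span F (Set.range f) ≤ LinearMap.ker L := by
    rw [Submodule.span_le, Set.range_subset_iff]
    exact fun j => LinearMap.mem_ker.mpr ((hL _).trans (hc j))
  exact (hL g).symm.trans (hle hg)

/-- A relation between the rows of the Wronskian matrix is a linear differential equation of order
less than `k` satisfied by the `k`-dimensional span of the `f j`. The degrees of its solutions are
roots of an indicial polynomial of degree less than `k`, too few for that many dimensions. -/
theorem det_wronskianMatrix_ne_zero {p k : ℕ} (hp : (Set.Iio p).InjOn (Nat.cast : ℕ → F))
    {f : Fin k → F[X]} (hf : LinearIndependent F f) (hdeg : ∀ j, (f j).natDegree < p) :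
    (wronskianMatrix f).det ≠ 0 := by
  classical
  intro hdet
  obtain ⟨c, hc0, hc⟩ := Matrix.exists_vecMul_eq_zero_iff.mpr hdet
  obtain ⟨h, hch, hlead⟩ := exists_natDegree_X_pow_mul_le hc0
  set I := indicialPoly fun r : Fin k => (X ^ k * c r).coeff (h + r)
  let S : Finset ℕ := {n ∈ Finset.range p | I.IsRoot (n : F)}
  have hS : S.card < k :=
    (card_le_natDegree_of_isRoot_natCast hp (indicialPoly_ne_zero hlead)
      (fun n hn => Finset.mem_range.mp (Finset.mem_filter.mp hn).1)
      (fun n hn => (Finset.mem_filter.mp hn).2)).trans_lt (natDegree_indicialPoly_lt hlead)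
  obtain ⟨g, hg, hg0, hgdeg⟩ :=
    exists_mem_span_natDegree_notMem hf (hS.trans_eq (Fintype.card_fin k).symm)
  have hgc : ∑ r, c r * derivative^[r] g = 0 :=
    sum_mul_iterate_derivative_eq_zero_of_mem_span (congrFun hc) hg
  have hgX : ∑ r, X ^ k * c r * derivative^[r] g = 0 := by
    simp_rw [mul_assoc, ← Finset.mul_sum, hgc, mul_zero]
  exact hgdeg <| Finset.mem_filter.mpr ⟨Finset.mem_range.mpr (natDegree_lt_of_mem_span hdeg hg hg0),
    isRoot_indicialPoly_natDegree hch hg0 hgX⟩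

end Wronskian

section DerivCofactor

variable {R : Type*} [CommRing R]

/-- If `Q * G' = E * G`, then `Q ^ r * (P * G)⁽ʳ⁾ = derivCofactor Q E r P * G`: the iterated
derivatives of `P * G` are again multiples of `G`, up to the denominator `Q ^ r`. -/
noncomputable def derivCofactor (Q E : R[X]) : ℕ → R[X] →ₗ[R] R[X]
  | 0 => LinearMap.id
  | r + 1 => (LinearMap.mulLeft R Q ∘ₗ derivative +
      LinearMap.mulLeft R (E - (r : R[X]) * derivative Q)) ∘ₗ derivCofactor Q E r

@[simp]
lemma derivCofactor_zero (Q E P : R[X]) : derivCofactor Q E 0 P = P := rfl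

lemma derivCofactor_succ (Q E P : R[X]) (r : ℕ) :
    derivCofactor Q E (r + 1) P = Q * derivative (derivCofactor Q E r P) +
      (E - (r : R[X]) * derivative Q) * derivCofactor Q E r P :=
  rfl

lemma mul_derivative_pow (Q : R[X]) (n : ℕ) :
    Q * derivative (Q ^ n) = n * derivative Q * Q ^ n := by
  cases n with
  | zero => simp
  | succ n =>
    rw [derivative_pow_succ]
    simp only [map_add, map_one, map_natCast, Nat.cast_succ]
    ring

lemma pow_mul_iterate_derivative_mul {Q E G : R[X]} (hG : Q * derivative G = E * G) (P : R[X])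
    (r : ℕ) : Q ^ r * derivative^[r] (P * G) = derivCofactor Q E r P * G := by
  induction r with
  | zero => simp
  | succ r ih =>
    have hder := congrArg (fun f => Q * derivative f) ih
    simp only [derivative_mul, mul_add] at hder
    rw [derivCofactor_succ, Function.iterate_succ_apply']
    linear_combination hder + derivCofactor Q E r P * hG - r * derivative Q * ih
      - derivative^[r] (P * G) * mul_derivative_pow Q r

lemma natDegree_derivCofactor_le {Q E : R[X]} {d : ℕ} (hQ : Q.natDegree ≤ d)
    (hE : E.natDegree ≤ d) (P : R[X]) (r : ℕ) :
    (derivCofactor Q E r P).natDegree ≤ P.natDegree + r * d := by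
  induction r with
  | zero => simp
  | succ r ih =>
    have hcoef : (E - (r : R[X]) * derivative Q).natDegree ≤ d := by
      refine (natDegree_sub_le_iff_left ?_).mpr hE
      rw [← nsmul_eq_mul]
      exact (natDegree_smul_le _ _).trans ((natDegree_derivative_le Q).trans (by omega))
    have hder := natDegree_derivative_le (derivCofactor Q E r P)
    have hexp : P.natDegree + (r + 1) * d = d + (P.natDegree + r * d) := by ring
    rw [derivCofactor_succ, hexp]
    exact natDegree_add_le_of_degree_le (natDegree_mul_le_of_le hQ (by omega))
      (natDegree_mul_le_of_le hcoef ih)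

lemma pow_mul_iterate_derivative_sum {κ : Type*} [Fintype κ] {Q : R[X]} {E G : κ → R[X]}
    (hG : ∀ j, Q * derivative (G j) = E j * G j) (P : κ → R[X]) (r : ℕ) :
    Q ^ r * derivative^[r] (∑ j, P j * G j) = ∑ j, derivCofactor Q (E j) r (P j) * G j := by
  rw [iterate_derivative_sum, Finset.mul_sum]
  exact Finset.sum_congr rfl fun j _ => pow_mul_iterate_derivative_mul (hG j) (P j) r

end DerivCofactor

section Determinant

variable {R : Type*} [CommRing R] {m : Type*} [Fintype m] [DecidableEq m]

lemma natDegree_det_le_card_mul {N : Matrix m m R[X]} {d : ℕ}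
    (h : ∀ i j, (N i j).natDegree ≤ d) : N.det.natDegree ≤ Fintype.card m * d := by
  rw [Matrix.det_apply]
  refine natDegree_sum_le_of_forall_le _ _ fun σ _ => ?_
  calc (Equiv.Perm.sign σ • ∏ i, N (σ i) i).natDegree
      ≤ (∏ i, N (σ i) i).natDegree := natDegree_smul_le _ _
    _ ≤ ∑ i, (N (σ i) i).natDegree := natDegree_prod_le _ _
    _ ≤ ∑ _i : m, d := Finset.sum_le_sum fun i _ => h _ _
    _ = Fintype.card m * d := by simp

lemma dvd_det_mul_of_dvd_mulVec {N : Matrix m m R} {v : m → R} {a : R}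
    (h : ∀ i, a ∣ N.mulVec v i) (j : m) : a ∣ N.det * v j := by
  have hadj : N.adjugate.mulVec (N.mulVec v) j = N.det * v j := by
    rw [Matrix.mulVec_mulVec, Matrix.adjugate_mul, Matrix.smul_mulVec, Matrix.one_mulVec]
    rfl
  exact hadj ▸ Finset.dvd_sum fun i _ => (h i).mul_left _

end Determinant

section VanishingOrder

variable {F : Type*} [Field F] {p : ℕ}

lemma det_derivCofactor_ne_zero {k : ℕ} (hp : (Set.Iio p).InjOn (Nat.cast : ℕ → F)) {Q : F[X]}
    (hQ : Q ≠ 0) {E G P : Fin k → F[X]} (hG : ∀ j, Q * derivative (G j) = E j * G j)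
    (hli : LinearIndependent F fun j => P j * G j) (hdeg : ∀ j, (P j * G j).natDegree < p) :
    (Matrix.of fun r j : Fin k => derivCofactor Q (E j) r (P j)).det ≠ 0 := by
  set N := Matrix.of fun r j : Fin k => derivCofactor Q (E j) r (P j)
  set W := wronskianMatrix fun j => P j * G j
  have hNW : (Matrix.of fun r j => G j * N r j) =
      Matrix.of fun r j : Fin k => Q ^ (r : ℕ) * W r j := by
    ext1 r j
    exact (mul_comm _ _).trans (pow_mul_iterate_derivative_mul (hG j) (P j) r).symm
  have hdet : (∏ j, G j) * N.det = (∏ r : Fin k, Q ^ (r : ℕ)) * W.det := by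
    rw [← Matrix.det_mul_row, hNW, Matrix.det_mul_column]
  refine right_ne_zero_of_mul (a := ∏ j, G j) ?_
  rw [hdet]
  exact mul_ne_zero (Finset.prod_ne_zero_iff.mpr fun r _ => pow_ne_zero _ hQ)
    (det_wronskianMatrix_ne_zero hp hli hdeg)

/-- Cramer's rule transfers the vanishing at `x` of `∑ j, P j * G j` and its first `k - 1`
derivatives to the determinant of the cofactors, whose degree is small. -/
lemma le_of_X_sub_C_pow_dvd_sum {k : ℕ} (hp : (Set.Iio p).InjOn (Nat.cast : ℕ → F)) {Q : F[X]}
    (hQ : Q ≠ 0) {E G P : Fin k → F[X]} (hG : ∀ j, Q * derivative (G j) = E j * G j) {d A : ℕ}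
    (hQd : Q.natDegree ≤ d) (hEd : ∀ j, (E j).natDegree ≤ d) (hPA : ∀ j, (P j).natDegree ≤ A)
    (hli : LinearIndependent F fun j => P j * G j) (hdeg : ∀ j, (P j * G j).natDegree < p)
    {x : F} {j₀ : Fin k} (hx : IsCoprime (X - C x) (G j₀)) {t : ℕ}
    (hdvd : (X - C x) ^ t ∣ ∑ j, P j * G j) : t ≤ k + k * (A + k * d) := by
  set N := Matrix.of fun r j : Fin k => derivCofactor Q (E j) r (P j)
  have hN : N.det ≠ 0 := det_derivCofactor_ne_zero hp hQ hG hli hdeg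
  have hNdeg : N.det.natDegree ≤ k * (A + k * d) := by
    refine (natDegree_det_le_card_mul fun r j => ?_).trans_eq (by rw [Fintype.card_fin])
    calc (derivCofactor Q (E j) r (P j)).natDegree
        ≤ (P j).natDegree + r * d := natDegree_derivCofactor_le hQd (hEd j) (P j) r
      _ ≤ A + k * d := by gcongr; exacts [hPA j, r.2.le]
  have hmulVec (r : Fin k) : (X - C x) ^ (t - k) ∣ N.mulVec G r := by
    have hr : N.mulVec G r = Q ^ (r : ℕ) * derivative^[r] (∑ j, P j * G j) :=
      (pow_mul_iterate_derivative_sum hG P r).symm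
    rw [hr]
    exact ((pow_dvd_pow _ (by omega)).trans
      (pow_sub_dvd_iterate_derivative_of_pow_dvd r hdvd)).mul_left _
  have hNdvd : (X - C x) ^ (t - k) ∣ N.det :=
    hx.pow_left.dvd_of_dvd_mul_right (dvd_det_mul_of_dvd_mulVec hmulVec j₀)
  have hle := natDegree_le_of_dvd hNdvd hN
  rw [natDegree_pow, natDegree_X_sub_C, mul_one] at hle
  omega

end VanishingOrder

section NodalPow

variable {R ι : Type*} [CommRing R] {s : Finset ι} {ν : ι → R} {e : ι → ℕ}

/-- The product of the linear factors `X - ν i`, `i ∈ s`, with multiplicities `e i`; it is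
`Lagrange.nodal s ν` when all multiplicities are one. -/
noncomputable def nodalPow (s : Finset ι) (ν : ι → R) (e : ι → ℕ) : R[X] :=
  ∏ i ∈ s, (X - C (ν i)) ^ e i

/-- The numerator of the logarithmic derivative of `nodalPow s ν e` over the common denominator
`Lagrange.nodal s ν`. -/
noncomputable def nodalPowLogDeriv [DecidableEq ι] (s : Finset ι) (ν : ι → R) (e : ι → ℕ) : R[X] :=
  ∑ i ∈ s, (e i : R[X]) * Lagrange.nodal (s.erase i) ν

lemma monic_nodalPow : (nodalPow s ν e).Monic :=
  monic_prod_of_monic _ _ fun i _ => (monic_X_sub_C (ν i)).pow (e i)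

lemma natDegree_nodalPow [Nontrivial R] : (nodalPow s ν e).natDegree = ∑ i ∈ s, e i := by
  simp [nodalPow, natDegree_prod_of_monic _ _ fun i _ => (monic_X_sub_C (ν i)).pow (e i),
    (monic_X_sub_C _).natDegree_pow]

lemma nodalPow_insert [DecidableEq ι] {i : ι} (hi : i ∉ s) :
    nodalPow (insert i s) ν e = (X - C (ν i)) ^ e i * nodalPow s ν e :=
  Finset.prod_insert hi

lemma natDegree_nodalPowLogDeriv_le [DecidableEq ι] [Nontrivial R] :
    (nodalPowLogDeriv s ν e).natDegree ≤ s.card :=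
  natDegree_sum_le_of_forall_le _ _ fun i _ => by
    rw [← nsmul_eq_mul]
    refine (natDegree_smul_le _ _).trans ?_
    rw [Lagrange.natDegree_nodal]
    exact Finset.card_erase_le

lemma nodal_mul_derivative_nodalPow [DecidableEq ι] :
    Lagrange.nodal s ν * derivative (nodalPow s ν e) =
      nodalPowLogDeriv s ν e * nodalPow s ν e := by
  rw [nodalPow, derivative_prod_finset, nodalPowLogDeriv, Finset.mul_sum, Finset.sum_mul]
  refine Finset.sum_congr rfl fun i hi => ?_
  have hpow := mul_derivative_pow (X - C (ν i)) (e i)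
  rw [derivative_X_sub_C, mul_one] at hpow
  rw [Lagrange.nodal_eq_mul_nodal_erase hi, ← Finset.mul_prod_erase s _ hi]
  linear_combination (Lagrange.nodal (s.erase i) ν *
    ∏ j ∈ s.erase i, (X - C (ν j)) ^ e j) * hpow

lemma isCoprime_X_sub_C_nodalPow {F : Type*} [Field F] {ν : ι → F} {x : F}
    (hx : ∀ i ∈ s, x ≠ ν i) : IsCoprime (X - C x) (nodalPow s ν e) :=
  IsCoprime.prod_right fun i hi => IsCoprime.pow_right <|
    isCoprime_X_sub_C_of_isUnit_sub (sub_ne_zero.mpr (hx i hi)).isUnit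

end NodalPow

section Independence

variable {F ι κ : Type*} [Field F] {p : ℕ} {s : Finset ι} {ν : ι → F}

lemma le_of_X_sub_C_pow_dvd_sum_nodalPow (hp : (Set.Iio p).InjOn (Nat.cast : ℕ → F))
    {e : κ → ι → ℕ} {J : Finset κ} (hJ : J.Nonempty) {P : κ → F[X]} {A : ℕ}
    (hA : ∀ j ∈ J, (P j).natDegree ≤ A) (hdeg : ∀ j ∈ J, (P j * nodalPow s ν (e j)).natDegree < p)
    (hli : LinearIndepOn F (fun j => P j * nodalPow s ν (e j)) J) {x : F}
    (hx : ∀ i ∈ s, x ≠ ν i) {t : ℕ}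
    (hdvd : (X - C x) ^ t ∣ ∑ j ∈ J, P j * nodalPow s ν (e j)) :
    t ≤ J.card + J.card * (A + J.card * s.card) := by
  classical
  let σ : Fin J.card ≃ J := J.equivFin.symm
  have hsum : ∑ a, P (σ a) * nodalPow s ν (e (σ a)) = ∑ j ∈ J, P j * nodalPow s ν (e j) :=
    (Equiv.sum_comp σ fun j : J => P j * nodalPow s ν (e j)).trans
      (Finset.sum_coe_sort J fun j => P j * nodalPow s ν (e j))
  exact le_of_X_sub_C_pow_dvd_sum hp Lagrange.nodal_ne_zero
    (fun a => nodal_mul_derivative_nodalPow) Lagrange.natDegree_nodal.le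
    (fun a => natDegree_nodalPowLogDeriv_le) (fun a => hA _ (σ a).2)
    (hli.comp σ σ.injective) (fun a => hdeg _ (σ a).2) (j₀ := ⟨0, hJ.card_pos⟩)
    (isCoprime_X_sub_C_nodalPow hx) (hsum ▸ hdvd)

/-- The terms of lowest order at `π` have order exactly `t * c`, the others at least
`t * (c + 1)`. -/
lemma pow_dvd_sum_filter_of_sum_eq_zero {R : Type*} [CommRing R] [IsDomain R] {π : R} (hπ : π ≠ 0)
    {J : Finset κ} {t c : ℕ} {a : κ → ℕ} (hc : ∀ j ∈ J, c ≤ a j) {f : κ → R}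
    (hsum : ∑ j ∈ J, π ^ (t * a j) * f j = 0) : π ^ t ∣ ∑ j ∈ J with a j = c, f j := by
  rw [← mul_dvd_mul_iff_left (pow_ne_zero (t * c) hπ), ← pow_add, Finset.mul_sum]
  have hlow : ∑ j ∈ J with a j = c, π ^ (t * c) * f j =
      -∑ j ∈ J with ¬a j = c, π ^ (t * a j) * f j := by
    rw [eq_neg_iff_add_eq_zero, ← hsum, ← Finset.sum_filter_add_sum_filter_not J (a · = c)]
    congr 1
    exact Finset.sum_congr rfl fun j hj => by rw [(Finset.mem_filter.mp hj).2]
  rw [hlow, dvd_neg]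
  refine Finset.dvd_sum fun j hj => (pow_dvd_pow π ?_).mul_right _
  obtain ⟨hjJ, hjc⟩ := Finset.mem_filter.mp hj
  calc t * c + t = t * (c + 1) := by ring
    _ ≤ t * a j := Nat.mul_le_mul_left t ((hc j hjJ).lt_of_ne' hjc)

lemma exists_subset_pow_dvd_sum {R : Type*} [CommRing R] [IsDomain R] {π : R} (hπ : π ≠ 0)
    {J : Finset κ} {t : ℕ} {a : κ → ℕ} {f : κ → R} (hsum : ∑ j ∈ J, π ^ (t * a j) * f j = 0)
    (hne : ∃ j ∈ J, f j ≠ 0) :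
    ∃ K ⊆ J, K.Nonempty ∧ (∀ j ∈ K, f j ≠ 0) ∧ (∃ c, ∀ j ∈ K, a j = c) ∧
      π ^ t ∣ ∑ j ∈ K, f j := by
  classical
  let J' : Finset κ := {j ∈ J | f j ≠ 0}
  have hJ' : J'.Nonempty := hne.imp fun j hj => Finset.mem_filter.mpr hj
  obtain ⟨j₀, hj₀, hmin⟩ := J'.exists_min_image a hJ'
  have hsum' : ∑ j ∈ J', π ^ (t * a j) * f j = 0 :=
    (Finset.sum_filter_of_ne fun j _ => right_ne_zero_of_mul).trans hsum
  exact ⟨{j ∈ J' | a j = a j₀}, (Finset.filter_subset _ _).trans (Finset.filter_subset _ _),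
    ⟨j₀, Finset.mem_filter.mpr ⟨hj₀, rfl⟩⟩,
    fun j hj => (Finset.mem_filter.mp (Finset.mem_filter.mp hj).1).2,
    ⟨a j₀, fun j hj => (Finset.mem_filter.mp hj).2⟩,
    pow_dvd_sum_filter_of_sum_eq_zero hπ hmin hsum'⟩

lemma injOn_restrict_of_injOn_restrict_insert {α : Type*} [DecidableEq ι] {e : κ → ι → α} {i : ι}
    {K : Set κ} (he : K.InjOn fun j => (insert i s).restrict (e j)) {c : α}
    (hc : ∀ j ∈ K, e j i = c) : K.InjOn fun j => s.restrict (e j) := by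
  intro j hj j' hj' hjj'
  refine he hj hj' (funext fun ⟨l, hl⟩ => ?_)
  rcases Finset.mem_insert.mp hl with rfl | hl
  · exact (hc j hj).trans (hc j' hj').symm
  · exact congrFun hjj' ⟨l, hl⟩

/-- Peel off a node `ν i`: the terms of lowest order there sum to a multiple of `(X - ν i) ^ t`,
whereas independence over the remaining nodes bounds the order of such a sum below `t`. -/
theorem eq_zero_of_sum_mul_nodalPow_eq_zero (hp : (Set.Iio p).InjOn (Nat.cast : ℕ → F))
    (hν : Function.Injective ν) {e : κ → ι → ℕ} {A t : ℕ} {J : Finset κ}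
    (he : Set.InjOn (fun j => s.restrict (e j)) J) {P : κ → F[X]}
    (hA : ∀ j ∈ J, (P j).natDegree ≤ A)
    (hdeg : ∀ j ∈ J, (P j * nodalPow s ν (t • e j)).natDegree < p)
    (ht : J.card + J.card * (A + J.card * s.card) < t)
    (hsum : ∑ j ∈ J, P j * nodalPow s ν (t • e j) = 0) : ∀ j ∈ J, P j = 0 := by
  classical
  induction s using Finset.induction_on generalizing J P with
  | empty =>
    intro j hj
    have hJ : J = {j} := Finset.eq_singleton_iff_unique_mem.mpr
      ⟨hj, fun j' hj' => he hj' hj (Subsingleton.elim _ _)⟩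
    simpa [hJ, nodalPow] using hsum
  | insert i s hi ih =>
    by_contra! hne
    have hsplit (j) : P j * nodalPow (insert i s) ν (t • e j) =
        (X - C (ν i)) ^ (t * e j i) * (P j * nodalPow s ν (t • e j)) := by
      rw [nodalPow_insert hi, mul_left_comm, Pi.smul_apply, smul_eq_mul]
    obtain ⟨K, hKJ, hK0, hPG, ⟨c, hc⟩, hdvd⟩ := exists_subset_pow_dvd_sum
      (X_sub_C_ne_zero (ν i)) (by simpa only [hsplit] using hsum)
      (hne.imp fun j hj => ⟨hj.1, mul_ne_zero hj.2 monic_nodalPow.ne_zero⟩)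
    have hcard : K.card ≤ J.card := Finset.card_le_card hKJ
    have htK : K.card + K.card * (A + K.card * s.card) < t := by
      refine lt_of_le_of_lt ?_ ht
      gcongr
      exact Finset.subset_insert i s
    have hdegK (j) (hj : j ∈ K) : (P j * nodalPow s ν (t • e j)).natDegree < p :=
      (natDegree_le_of_dvd (Dvd.intro_left _ (hsplit j).symm)
        (mul_ne_zero (left_ne_zero_of_mul (hPG j hj)) monic_nodalPow.ne_zero)).trans_lt
          (hdeg j (hKJ hj))
    have heK : Set.InjOn (fun j => s.restrict (e j)) K :=
      injOn_restrict_of_injOn_restrict_insert (he.mono hKJ) hc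
    have hli : LinearIndepOn F (fun j => P j * nodalPow s ν (t • e j)) K := by
      refine linearIndepOn_finset_iff.mpr fun a ha j hj => ?_
      have haP : a j • P j = 0 := ih heK (P := fun j => a j • P j)
        (fun j hj => (natDegree_smul_le _ _).trans (hA j (hKJ hj)))
        (fun j hj => by
          rw [smul_mul_assoc]
          exact (natDegree_smul_le _ _).trans_lt (hdegK j hj))
        htK (by simpa only [smul_mul_assoc] using ha) j hj
      exact (smul_eq_zero.mp haP).resolve_right (left_ne_zero_of_mul (hPG j hj))
    exact htK.not_ge <| le_of_X_sub_C_pow_dvd_sum_nodalPow (x := ν i) hp hK0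
      (fun j hj => hA j (hKJ hj)) hdegK hli (fun l hl h => hi ((hν h).symm ▸ hl)) hdvd

end Independence

section Stepanov

variable {F : Type*} [Field F] {p : ℕ}

/-- The coefficients of the `P j` are `card κ * A` unknowns in `D * (A + D * d)` linear
equations. -/
lemma exists_sum_derivCofactor_eq_zero {κ : Type*} [Fintype κ] {Q : F[X]} {E : κ → F[X]}
    {d A D : ℕ} (hQ : Q.natDegree ≤ d) (hE : ∀ j, (E j).natDegree ≤ d)
    (hcount : D * (A + D * d) < Fintype.card κ * A) :
    ∃ P : κ → F[X], P ≠ 0 ∧ (∀ j, (P j).natDegree < A) ∧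
      ∀ r < D, ∑ j, derivCofactor Q (E j) r (P j) = 0 := by
  let coeffs : (κ → degreeLT F A) →ₗ[F] (Fin D × Fin (A + D * d) → F) :=
    LinearMap.pi fun rl => ∑ j, lcoeff F rl.2 ∘ₗ derivCofactor Q (E j) rl.1 ∘ₗ
      (degreeLT F A).subtype ∘ₗ LinearMap.proj j
  have : FiniteDimensional F (degreeLT F A) := Module.Finite.equiv (degreeLTEquiv F A).symm
  have hker : LinearMap.ker coeffs ≠ ⊥ := LinearMap.ker_ne_bot_of_finrank_lt <| by
    simpa [Module.finrank_pi_fintype, (degreeLTEquiv F A).finrank_eq] using hcount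
  obtain ⟨P, hP, hP0⟩ := (Submodule.ne_bot_iff _).mp hker
  have hA : 0 < A := Nat.pos_of_ne_zero fun h => by simp [h] at hcount
  have hPA (j : κ) : (P j : F[X]).natDegree < A := by
    by_cases h : (P j : F[X]) = 0
    · rwa [h, natDegree_zero]
    · exact (natDegree_lt_iff_degree_lt h).mpr (mem_degreeLT.mp (P j).2)
  refine ⟨fun j => P j, fun h => hP0 (funext fun j => Subtype.ext (congrFun h j)), hPA,
    fun r hr => Polynomial.ext fun l => ?_⟩
  rcases lt_or_ge l (A + D * d) with hl | hl
  · simpa [coeffs, finsetSum_coeff] using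
      congrFun (LinearMap.mem_ker.mp hP) (⟨r, hr⟩, ⟨l, hl⟩)
  · rw [finsetSum_coeff, coeff_zero]
    refine Finset.sum_eq_zero fun j _ => coeff_eq_zero_of_natDegree_lt ?_
    calc (derivCofactor Q (E j) r (P j)).natDegree
        ≤ (P j : F[X]).natDegree + r * d := natDegree_derivCofactor_le hQ (hE j) _ r
      _ < A + D * d := add_lt_add_of_lt_of_le (hPA j) (Nat.mul_le_mul_right d hr.le)
      _ ≤ l := hl

lemma le_rootMultiplicity_sum {κ : Type*} [Fintype κ]
    (hp : (Set.Iio p).InjOn (Nat.cast : ℕ → F)) {Q : F[X]} {E G P : κ → F[X]}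
    (hG : ∀ j, Q * derivative (G j) = E j * G j) {x : F} (hQx : Q.eval x ≠ 0)
    (hGx : ∀ j, (G j).eval x = 1) {D : ℕ} (hDp : D ≤ p)
    (hP : ∀ r < D, ∑ j, derivCofactor Q (E j) r (P j) = 0) (h0 : ∑ j, P j * G j ≠ 0) :
    D ≤ (∑ j, P j * G j).rootMultiplicity x := by
  refine le_of_forall_lt fun r hr =>
    lt_rootMultiplicity_of_isRoot_iterate_derivative_of_mem_nonZeroDivisors' h0
      (fun l hl => ?_) fun l hl hl0 => mem_nonZeroDivisors_of_ne_zero fun h => hl0 ?_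
  · have hder := congrArg (eval x) (pow_mul_iterate_derivative_sum hG P l)
    simp only [eval_mul, eval_pow, eval_finsetSum, hGx, mul_one] at hder
    rw [← eval_finsetSum, hP l (hl.trans_lt hr), eval_zero] at hder
    exact (mul_eq_zero.mp hder).resolve_left (pow_ne_zero l hQx)
  · have hlp : l < p := (hl.trans_lt hr).trans_le hDp
    exact hp hlp (l.zero_le.trans_lt hlp) (h.trans Nat.cast_zero.symm)

lemma card_mul_le_natDegree_of_le_rootMultiplicity {R : Type*} [CommRing R] [IsDomain R]
    {f : R[X]} {M : Finset R} {D : ℕ} (h : ∀ x ∈ M, D ≤ f.rootMultiplicity x) :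
    M.card * D ≤ f.natDegree := by
  classical
  have hle : D • M.val ≤ f.roots := Multiset.le_iff_count.mpr fun x => by
    rw [Multiset.count_nsmul, count_roots]
    by_cases hx : x ∈ M
    · simpa [Multiset.count_eq_one_of_mem M.nodup hx] using h x hx
    · simp [Multiset.count_eq_zero_of_notMem hx]
  calc M.card * D = (D • M.val).card := by rw [Multiset.card_nsmul, mul_comm]; rfl
    _ ≤ f.roots.card := Multiset.card_le_card hle
    _ ≤ f.natDegree := card_roots' f

/-- Stepanov's method: a nonzero combination of the products `nodalPow univ ν (t • e j)`, all
equal to `1` on `M`, that vanishes to order `D` at every point of `M`. -/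
theorem card_mul_le_of_forall_sub_pow_eq_one (hp : (Set.Iio p).InjOn (Nat.cast : ℕ → F))
    {ι κ : Type*} [Fintype ι] [Fintype κ] {ν : ι → F} (hν : Function.Injective ν)
    {e : κ → ι → ℕ} (he : Function.Injective e) {A B D t : ℕ} (heB : ∀ j i, e j i ≤ B)
    (ht : Fintype.card κ + Fintype.card κ * (A + Fintype.card κ * Fintype.card ι) < t)
    (hcount : D * (A + D * Fintype.card ι) < Fintype.card κ * A)
    (hBp : A + Fintype.card ι * (t * B) ≤ p) (hDp : D ≤ p) {M : Finset F}
    (hM : ∀ x ∈ M, ∀ i, (x - ν i) ^ t = 1) :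
    M.card * D ≤ A + Fintype.card ι * (t * B) := by
  classical
  let Q := Lagrange.nodal Finset.univ ν
  let G (j : κ) := nodalPow Finset.univ ν (t • e j)
  let E (j : κ) := nodalPowLogDeriv Finset.univ ν (t • e j)
  have hG (j : κ) : Q * derivative (G j) = E j * G j := nodal_mul_derivative_nodalPow
  obtain ⟨P, hP0, hPA, hP⟩ := exists_sum_derivCofactor_eq_zero (Q := Q) (E := E)
    Lagrange.natDegree_nodal.le (fun j => natDegree_nodalPowLogDeriv_le) hcount
  have hGdeg (j : κ) : (G j).natDegree ≤ Fintype.card ι * (t * B) := by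
    rw [natDegree_nodalPow, ← smul_eq_mul, ← Finset.card_univ]
    exact Finset.sum_le_card_nsmul _ _ _ fun i _ => Nat.mul_le_mul_left t (heB j i)
  have hPG (j : κ) : (P j * G j).natDegree < A + Fintype.card ι * (t * B) :=
    natDegree_mul_le.trans_lt (add_lt_add_of_lt_of_le (hPA j) (hGdeg j))
  have hΨ0 : ∑ j, P j * G j ≠ 0 := fun h => hP0 <| funext fun j =>
    eq_zero_of_sum_mul_nodalPow_eq_zero hp hν (J := Finset.univ)
      (fun j _ j' _ hjj' => he (funext fun i => congrFun hjj' ⟨i, Finset.mem_univ i⟩))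
      (fun j _ => (hPA j).le) (fun j _ => (hPG j).trans_le hBp) ht h j (Finset.mem_univ j)
  have hmult (x) (hx : x ∈ M) : D ≤ (∑ j, P j * G j).rootMultiplicity x := by
    refine le_rootMultiplicity_sum hp hG ?_ (fun j => ?_) hDp hP hΨ0
    · refine Lagrange.eval_nodal_not_at_node fun i _ hxi => ?_
      have := hM x hx i
      rw [hxi, sub_self, zero_pow (by omega)] at this
      exact zero_ne_one this
    · simp [G, nodalPow, eval_prod, pow_mul, hM x hx]
  exact (card_mul_le_natDegree_of_le_rootMultiplicity hmult).trans <|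
    natDegree_sum_le_of_forall_le _ _ fun j _ => (hPG j).le

/-- The choice `A = n * D` and `card κ = 2 * D + 1` in Stepanov's method, where `n = card ι`. -/
lemma card_mul_le_of_two_mul_add_one_le_pow (hp : (Set.Iio p).InjOn (Nat.cast : ℕ → F))
    {ι : Type*} [Fintype ι] [Nonempty ι] {ν : ι → F} (hν : Function.Injective ν)
    {B D t : ℕ} (hD : 2 < D) (ht : 9 * Fintype.card ι ^ 2 * D ^ 2 ≤ t)
    (hDB : 2 * D + 1 ≤ (B + 1) ^ Fintype.card ι)
    (hBp : Fintype.card ι * D + Fintype.card ι * (t * B) ≤ p) {M : Finset F}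
    (hM : ∀ x ∈ M, ∀ i, (x - ν i) ^ t = 1) :
    M.card * D ≤ Fintype.card ι * D + Fintype.card ι * (t * B) := by
  classical
  obtain ⟨e⟩ : Nonempty (Fin (2 * D + 1) ↪ (ι → Fin (B + 1))) :=
    Function.Embedding.nonempty_of_card_le (by simpa using hDB)
  have hn : 0 < Fintype.card ι := Fintype.card_pos
  set n := Fintype.card ι
  have hnD : D ≤ n * D := Nat.le_mul_of_pos_left D hn
  refine card_mul_le_of_forall_sub_pow_eq_one hp hν (e := fun j i => (e j i : ℕ))
    (fun j j' h => e.injective (funext fun i => Fin.ext (congrFun h i)))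
    (fun j i => Nat.lt_succ_iff.mp (e j i).2) ?_ ?_ hBp
    (hnD.trans ((Nat.le_add_right _ _).trans hBp)) hM
  · rw [Fintype.card_fin]
    refine lt_of_lt_of_le ?_ ht
    have hn2 : n * D ^ 2 ≤ n ^ 2 * D ^ 2 :=
      Nat.mul_le_mul_right _ (Nat.le_self_pow two_ne_zero n)
    have hD2 : 3 * (n * D) ≤ n * D ^ 2 := by nlinarith
    nlinarith
  · rw [Fintype.card_fin]
    nlinarith

lemma card_le_of_forall_sub_pow_eq_one {ν : F} {t : ℕ} (ht : 0 < t) {M : Finset F}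
    (hM : ∀ x ∈ M, (x - ν) ^ t = 1) : M.card ≤ t := by
  classical
  calc M.card ≤ (nthRoots t (1 : F)).toFinset.card :=
        Finset.card_le_card_of_injOn (· - ν)
          (fun x hx => by simpa [mem_nthRoots ht] using hM x hx) (sub_left_injective.injOn)
    _ ≤ (nthRoots t (1 : F)).card := Multiset.toFinset_card_le _
    _ ≤ t := card_nthRoots t 1

end Stepanov

section Parameters

/-- The choice is `B = ⌊u⌋` and `D = ⌈u ^ n / (4 * n)⌉`. -/
lemma exists_stepanov_parameters {n t : ℕ} (hn : n ≠ 0) {u : ℝ} (hu : 1 ≤ u)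
    (hut : u ^ (2 * n) = t) (h : 4 * n * (n + 1) * u < u ^ n) :
    ∃ B D : ℕ, 2 < D ∧ 9 * n ^ 2 * D ^ 2 ≤ t ∧ 2 * D + 1 ≤ (B + 1) ^ n ∧ (B : ℝ) ≤ u ∧
      u ^ n ≤ 4 * n * D := by
  have hn2 : 2 ≤ n := (Nat.two_le_iff n).mpr ⟨hn, by rintro rfl; norm_num at h; linarith⟩
  have hn2' : (2 : ℝ) ≤ n := mod_cast hn2
  set q := u ^ n / (4 * n)
  have hq : u ^ n = 4 * n * q := by simp only [q]; field_simp
  have hq3 : 3 < q := by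
    have : 4 * n * (n + 1) < 4 * n * q :=
      hq ▸ (le_mul_of_one_le_right (by positivity) hu).trans_lt h
    linarith [lt_of_mul_lt_mul_left this (by positivity)]
  have hqD : q ≤ ⌈q⌉₊ := Nat.le_ceil q
  have hDq : (⌈q⌉₊ : ℝ) < 4 / 3 * q := by
    linarith [Nat.ceil_lt_add_one (zero_le_three.trans hq3.le)]
  refine ⟨⌊u⌋₊, ⌈q⌉₊, ?_, ?_, ?_, Nat.floor_le (zero_le_one.trans hu), ?_⟩
  · exact_mod_cast (show (2 : ℝ) < ⌈q⌉₊ by linarith)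
  · have : (9 * n ^ 2 * ⌈q⌉₊ ^ 2 : ℝ) ≤ t :=
      calc (9 * n ^ 2 * ⌈q⌉₊ ^ 2 : ℝ) ≤ 9 * n ^ 2 * (4 / 3 * q) ^ 2 := by gcongr
        _ = (u ^ n) ^ 2 := by rw [hq]; ring
        _ = t := by rw [← hut, ← pow_mul, mul_comm]
    exact_mod_cast this
  · have : (2 * ⌈q⌉₊ + 1 : ℝ) ≤ (⌊u⌋₊ + 1) ^ n :=
      calc (2 * ⌈q⌉₊ + 1 : ℝ) ≤ 4 * n * q := by nlinarith
        _ = u ^ n := hq.symm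
        _ ≤ (⌊u⌋₊ + 1) ^ n := by gcongr; exact (Nat.lt_floor_add_one u).le
    exact_mod_cast this
  · rw [hq]
    gcongr

lemma mul_pow_le_of_pow_le_rpow_mul_rpow {n : ℕ} (hn : n ≠ 0) {u p : ℝ} (hu : 0 ≤ u) (hp : 0 ≤ p)
    (h : u ^ (2 * n) ≤ ((n : ℝ) + 1) ^ (-(2 * (n : ℝ)) / (2 * (n : ℝ) + 1)) *
      p ^ ((1 : ℝ) - 1 / (2 * (n : ℝ) + 1))) :
    (n + 1) * u ^ (2 * n + 1) ≤ p := by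
  set a : ℝ := 2 * n / (2 * n + 1)
  have hleft : u ^ (2 * n) = (u ^ (2 * n + 1)) ^ a := by
    rw [← Real.rpow_natCast, ← Real.rpow_natCast, ← Real.rpow_mul hu]
    congr 1
    simp only [a]
    push_cast
    field_simp
  have hright : ((n : ℝ) + 1) ^ (-(2 * (n : ℝ)) / (2 * (n : ℝ) + 1)) *
      p ^ ((1 : ℝ) - 1 / (2 * (n : ℝ) + 1)) = (p / (n + 1)) ^ a := by
    have hexp : (1 : ℝ) - 1 / (2 * n + 1) = a := by simp only [a]; field_simp; ring
    rw [Real.div_rpow hp (by positivity), hexp, neg_div, Real.rpow_neg (by positivity),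
      inv_mul_eq_div]
  rw [hleft, hright, Real.rpow_le_rpow_iff (by positivity) (by positivity) (by positivity),
    le_div_iff₀' (by positivity)] at h
  exact h

lemma pow_rpow_half_add_eq_pow {n : ℕ} (hn : n ≠ 0) {u : ℝ} (hu : 0 ≤ u) :
    (u ^ (2 * n)) ^ ((1 : ℝ) / 2 + 1 / (2 * (n : ℝ))) = u ^ (n + 1) := by
  rw [← Real.rpow_natCast_mul hu, ← Real.rpow_natCast]
  congr 1
  push_cast
  field_simp

end Parameters

section Shifts

variable {F : Type*} [Field F] {p : ℕ}

theorem card_le_mul_pow_of_forall_sub_pow_eq_one (hp : (Set.Iio p).InjOn (Nat.cast : ℕ → F))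
    {ι : Type*} [Fintype ι] [Nonempty ι] {ν : ι → F} (hν : Function.Injective ν) {t : ℕ} {u : ℝ}
    (hu : 1 ≤ u) (hut : u ^ (2 * Fintype.card ι) = t)
    (hup : (Fintype.card ι + 1) * u ^ (2 * Fintype.card ι + 1) ≤ p) {M : Finset F}
    (hM : ∀ x ∈ M, ∀ i, (x - ν i) ^ t = 1) :
    (M.card : ℝ) ≤
      4 * Fintype.card ι * (Fintype.card ι + 1) * u ^ (Fintype.card ι + 1) := by
  have hn : Fintype.card ι ≠ 0 := Fintype.card_ne_zero
  have ht : 0 < t := Nat.cast_pos.mp (hut ▸ by positivity : (0 : ℝ) < t)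
  rcases le_or_gt (u ^ Fintype.card ι) (4 * Fintype.card ι * (Fintype.card ι + 1) * u)
    with hsmall | hbig
  · have hMt : M.card ≤ t := card_le_of_forall_sub_pow_eq_one ht
      fun x hx => hM x hx (Classical.arbitrary ι)
    set n := Fintype.card ι
    calc (M.card : ℝ) ≤ t := mod_cast hMt
      _ = u ^ n * u ^ n := by rw [← hut, two_mul, pow_add]
      _ ≤ 4 * n * (n + 1) * u * u ^ n := by gcongr
      _ = 4 * n * (n + 1) * u ^ (n + 1) := by ring
  · obtain ⟨B, D, hD, hDt, hDB, hBu, huD⟩ := exists_stepanov_parameters hn hu hut hbig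
    have hstep := card_mul_le_of_two_mul_add_one_le_pow hp hν hD hDt hDB (M := M)
    set n := Fintype.card ι
    have hnD : n * D ≤ t := by nlinarith
    have hle : (n * D + n * (t * B) : ℝ) ≤ (n + 1) * u ^ (2 * n + 1) :=
      calc (n * D + n * (t * B) : ℝ) ≤ t + n * (t * B) := by gcongr; exact_mod_cast hnD
        _ ≤ t * u + n * (t * u) := by
          gcongr
          exact le_mul_of_one_le_right t.cast_nonneg hu
        _ = (n + 1) * u ^ (2 * n + 1) := by rw [← hut]; ring
    refine le_of_mul_le_mul_right ?_ (by positivity : 0 < u ^ n)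
    calc (M.card : ℝ) * u ^ n ≤ M.card * (4 * n * D) := by gcongr
      _ = 4 * n * (M.card * D) := by ring
      _ ≤ 4 * n * (n * D + n * (t * B)) := by
        gcongr
        exact_mod_cast hstep (by exact_mod_cast hle.trans hup) hM
      _ ≤ 4 * n * ((n + 1) * u ^ (2 * n + 1)) := by gcongr
      _ = 4 * n * (n + 1) * u ^ (n + 1) * u ^ n := by ring

theorem corollary_shifts_general (p n : ℕ) (hp : (Set.Iio p).InjOn (Nat.cast : ℕ → F))
    (hn : n ≠ 0) (Γ : Subgroup Fˣ) [Finite Γ] (μ : Fin (n - 1) → Fˣ) (hμ : Function.Injective μ)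
    (hup : (Nat.card Γ : ℝ) ≤
        ((n : ℝ) + 1) ^ (-(2 * (n : ℝ)) / (2 * (n : ℝ) + 1)) *
          (p : ℝ) ^ ((1 : ℝ) - 1 / (2 * (n : ℝ) + 1))) :
    (Nat.card {x : F | (∃ γ ∈ Γ, x = (γ : Fˣ)) ∧
        ∀ i : Fin (n - 1), ∃ γ ∈ Γ, x = ((γ : Fˣ) : F) + (μ i : F)} : ℝ) ≤
      4 * (n : ℝ) * ((n : ℝ) + 1) *
        (Nat.card Γ : ℝ) ^ ((1 : ℝ) / 2 + 1 / (2 * (n : ℝ))) := by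
  let ν (o : Option (Fin (n - 1))) : F := o.elim 0 fun i => μ i
  have hν : Function.Injective ν := Option.injective_iff.mpr
    ⟨Units.val_injective.comp hμ, fun ⟨i, hi⟩ => (μ i).ne_zero hi⟩
  have hcard : Fintype.card (Option (Fin (n - 1))) = n := by simp; omega
  have hpow (γ : Fˣ) (hγ : γ ∈ Γ) : (γ : F) ^ Nat.card Γ = 1 := by
    have hγt : γ ^ Nat.card Γ = 1 := congrArg Subtype.val (pow_card_eq_one' (x := (⟨γ, hγ⟩ : Γ)))
    rw [← Units.val_pow_eq_pow_val, hγt, Units.val_one]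
  have ht : (1 : ℝ) ≤ Nat.card Γ := mod_cast Nat.card_pos
  obtain ⟨u, hu, hut⟩ : ∃ u : ℝ, 1 ≤ u ∧ u ^ (2 * n) = Nat.card Γ :=
    ⟨_, Real.one_le_rpow ht (by positivity), Real.rpow_inv_natCast_pow (by positivity) (by omega)⟩
  set S := {x : F | (∃ γ ∈ Γ, x = (γ : Fˣ)) ∧
    ∀ i : Fin (n - 1), ∃ γ ∈ Γ, x = ((γ : Fˣ) : F) + (μ i : F)}
  have hS : S.Finite := ((Γ : Set Fˣ).toFinite.image Units.val).subset
    fun x ⟨⟨γ, hγ, hx⟩, _⟩ => ⟨γ, hγ, hx.symm⟩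
  have hM (x) (hx : x ∈ hS.toFinset) (o) : (x - ν o) ^ Nat.card Γ = 1 := by
    obtain ⟨⟨γ, hγ, rfl⟩, hshift⟩ := hS.mem_toFinset.mp hx
    cases o with
    | none => simpa [ν] using hpow γ hγ
    | some i =>
      obtain ⟨δ, hδ, hxδ⟩ := hshift i
      simpa [ν, hxδ] using hpow δ hδ
  have hbound := card_le_mul_pow_of_forall_sub_pow_eq_one hp hν hu (by rw [hcard, hut])
    (by rw [hcard]; exact mul_pow_le_of_pow_le_rpow_mul_rpow hn (by positivity) (by positivity)
          (hut ▸ hup)) hM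
  rwa [hcard, ← Set.ncard_eq_toFinset_card S hS,
    ← pow_rpow_half_add_eq_pow hn (zero_le_one.trans hu), hut] at hbound

end Shifts

/-- Corollary (the result of Shkredov–Vyugin): bound on the intersection of a
subgroup of `F_p^*` with `n-1` pairwise distinct additive shifts of itself. -/
theorem corollary_shifts (p n : ℕ) [Fact p.Prime] (hn : 2 ≤ n)
    (Γ : Subgroup (ZMod p)ˣ) (μ : Fin (n - 1) → (ZMod p)ˣ) (hμ : Function.Injective μ)
    (hlow : (2 : ℝ) ^ (2 * n) < Nat.card Γ)
    (hup : (Nat.card Γ : ℝ) <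
        ((n : ℝ) + 1) ^ (-(2 * (n : ℝ)) / (2 * (n : ℝ) + 1)) *
          (p : ℝ) ^ ((1 : ℝ) - 1 / (2 * (n : ℝ) + 1))) :
    (Nat.card {x : ZMod p | (∃ γ ∈ Γ, x = (γ : (ZMod p)ˣ)) ∧
        ∀ i : Fin (n - 1), ∃ γ ∈ Γ, x = ((γ : (ZMod p)ˣ) : ZMod p) + (μ i : ZMod p)} : ℝ) ≤
      4 * (n : ℝ) * ((n : ℝ) + 1) *
        (Nat.card Γ : ℝ) ^ ((1 : ℝ) / 2 + 1 / (2 * (n : ℝ))) :=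
  corollary_shifts_general p n (CharP.natCast_injOn_Iio (ZMod p) p) (by omega) Γ μ hμ hup.le
end

section
/- Let G = {x ∈ ℂ : x^t = 1} be the group of t-th roots of unity in ℂ^*, and let G_1, …, G_n be cosets of G in ℂ^* (G_i = g_i G with g_i ∈ ℂ^*), n ≥ 2. Let f_1(x), …, f_n(x) ∈ ℂ[x] be an admissible set of polynomials of degrees m_1 ≤ m_2 ≤ … ≤ m_n, and set M = {x ∈ ℂ : f_i(x) ∈ G_i for all i = 1, …, n}. If t = |G| > 2^{2n} m_n^{4n}, then |M| ≤ 4(n+1)(m_1 + ⋯ + m_n)(m_1 ⋯ m_n)^{1/n} · t^{1/2 + 1/(2n)}. -/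
/-- A set of polynomials `f 0, …, f (n-1)` is admissible if there exist points
`x 0, …, x (n-1)` with `f i (x i) = 0`, `f j (x i) ≠ 0` for `j ≠ i`,
and `f i 0 ≠ 0` for all `i`. -/
def AdmissibleSet {n : ℕ} {K : Type*} [CommRing K] (f : Fin n → Polynomial K) : Prop :=
  ∃ x : Fin n → K, (∀ i, (f i).eval (x i) = 0) ∧
    (∀ i j, j ≠ i → (f j).eval (x i) ≠ 0) ∧ (∀ i, (f i).eval 0 ≠ 0)

/-!
Roots of unity have norm `1`, so every `x` in the set satisfies
`f i (x) * conj (f i (x)) = |g i| ^ 2`. Regarding `y = conj x` as an independent variable, each `i`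
gives a curve `f i (x) * (conj (f i)) (y) = |g i| ^ 2` of bidegree `(m i, m i)`. At a root `x` of
`f a` that is not a root of `f b`, the first curve has no point above `x`, so the resultant in `y`
of the curves of `a` and `b` is a nonzero polynomial in `x`. Its degree is at most `2 * m a * m b`,
independently of the order of the group. Taking `m a` minimal bounds it by the geometric mean.
-/

section Elimination

open Polynomial

section CommRing

variable {R : Type*} [CommRing R]

lemma natDegree_det_le_sum {ι : Type*} [Fintype ι] [DecidableEq ι] (A : Matrix ι ι R[X])
    (d : ι → ℕ) (h : ∀ i j, (A i j).natDegree ≤ d j) : A.det.natDegree ≤ ∑ j, d j := by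
  rw [Matrix.det_apply]
  refine natDegree_sum_le_of_forall_le _ _ fun σ _ ↦ ?_
  calc (Equiv.Perm.sign σ • ∏ j, A (σ j) j).natDegree
      ≤ (∏ j, A (σ j) j).natDegree := natDegree_smul_le _ _
    _ ≤ ∑ j, (A (σ j) j).natDegree := natDegree_prod_le _ _
    _ ≤ ∑ j, d j := Finset.sum_le_sum fun j _ ↦ h (σ j) j

lemma natDegree_resultant_le {F H : R[X][X]} {a b : ℕ} (hF : ∀ k, (F.coeff k).natDegree ≤ a)
    (hH : ∀ k, (H.coeff k).natDegree ≤ b) (m n : ℕ) :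
    (resultant F H m n).natDegree ≤ m * b + n * a := by
  have natDegree_sylvester_le (i j : Fin (m + n)) :
      (sylvester F H m n i j).natDegree ≤ Fin.append (fun _ : Fin m ↦ b) (fun _ : Fin n ↦ a) j := by
    rw [sylvester, Matrix.of_apply]
    refine Fin.addCases (fun j ↦ ?_) (fun j ↦ ?_) j
    · rw [Fin.addCases_left, Fin.append_left]
      split_ifs
      exacts [hH _, by simp]
    · rw [Fin.addCases_right, Fin.append_right]
      split_ifs
      exacts [hF _, by simp]
  refine (natDegree_det_le_sum _ _ natDegree_sylvester_le).trans_eq ?_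
  simp [Fin.sum_univ_add]

lemma resultant_eq_zero_of_eval_eq_zero {f g : R[X]} {m n : ℕ} (hf : f.natDegree ≤ m)
    (hg : g.natDegree ≤ n) (hmn : m ≠ 0 ∨ n ≠ 0) {w : R} (hfw : f.eval w = 0)
    (hgw : g.eval w = 0) : resultant f g m n = 0 := by
  obtain ⟨p, q, -, -, hpq⟩ := exists_mul_add_mul_eq_C_resultant f g hf hg hmn
  simpa [hfw, hgw] using (congrArg (eval w) hpq).symm

/-- The polynomial `P(x) P'(y) - c`, as a polynomial in `y` over `R[x]`. -/
noncomputable def productCurve (P P' : R[X]) (c : R) : R[X][X] :=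
  C P * P'.map C - C (C c)

lemma productCurve_map_evalRingHom (P P' : R[X]) (c z : R) :
    (productCurve P P' c).map (evalRingHom z) = C (P.eval z) * P' - C c := by
  have : (evalRingHom z).comp C = RingHom.id R := by ext; simp
  simp [productCurve, Polynomial.map_map, this]

lemma natDegree_coeff_productCurve_le (P P' : R[X]) (c : R) (k : ℕ) :
    ((productCurve P P' c).coeff k).natDegree ≤ P.natDegree := by
  rw [productCurve, coeff_sub, coeff_C_mul, coeff_map, coeff_C]
  refine (natDegree_sub_le _ _).trans (max_le (natDegree_mul_C_le _ _) ?_)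
  split_ifs <;> simp

/-- The eliminant of `y` from the equations `P(x) P'(y) = c` and `Q(x) Q'(y) = d`. The resultant is
taken in the formal degrees `deg P'` and `deg Q'`, so that it commutes with specializing `x` even
where a leading coefficient vanishes. -/
noncomputable def productEliminant (P P' : R[X]) (c : R) (Q Q' : R[X]) (d : R) : R[X] :=
  resultant (productCurve P P' c) (productCurve Q Q' d) P'.natDegree Q'.natDegree

variable {P P' Q Q' : R[X]} {c d : R}

lemma eval_productEliminant (z : R) :
    (productEliminant P P' c Q Q' d).eval z =
      resultant (C (P.eval z) * P' - C c) (C (Q.eval z) * Q' - C d)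
        P'.natDegree Q'.natDegree := by
  rw [← productCurve_map_evalRingHom, ← productCurve_map_evalRingHom, resultant_map_map]
  rfl

lemma natDegree_productEliminant_le :
    (productEliminant P P' c Q Q' d).natDegree ≤
      P'.natDegree * Q.natDegree + Q'.natDegree * P.natDegree :=
  natDegree_resultant_le (natDegree_coeff_productCurve_le P P' c)
    (natDegree_coeff_productCurve_le Q Q' d) _ _

lemma eval_productEliminant_eq_zero (hQ' : Q'.natDegree ≠ 0) {z w : R}
    (hP : P.eval z * P'.eval w = c) (hQ : Q.eval z * Q'.eval w = d) :
    (productEliminant P P' c Q Q' d).eval z = 0 := by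
  have natDegree_fiber_le (S : R[X]) (r e : R) : (C r * S - C e).natDegree ≤ S.natDegree := by
    rw [natDegree_sub_C]
    exact natDegree_C_mul_le _ _
  rw [eval_productEliminant]
  exact resultant_eq_zero_of_eval_eq_zero (natDegree_fiber_le _ _ _) (natDegree_fiber_le _ _ _)
    (Or.inr hQ') (w := w) (by simp [hP]) (by simp [hQ])

lemma productEliminant_ne_zero [IsDomain R] (hc : c ≠ 0) (hQ' : Q'.natDegree ≠ 0) {x : R}
    (hPx : P.eval x = 0) (hQx : Q.eval x ≠ 0) : productEliminant P P' c Q Q' d ≠ 0 := by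
  have leadingCoeff_ne : Q'.leadingCoeff ≠ 0 :=
    leadingCoeff_ne_zero.2 (ne_zero_of_natDegree_gt (Nat.pos_of_ne_zero hQ'))
  have eval_ne : (productEliminant P P' c Q Q' d).eval x ≠ 0 := by
    rw [eval_productEliminant, hPx, map_zero, zero_mul, zero_sub, ← C_neg, resultant_C_left]
    simp [coeff_C, hQ', hc, hQx, leadingCoeff_ne]
  intro h
  simp [h] at eval_ne

end CommRing

section Field

variable {K : Type*} [Field K] (σ : K →+* K)

theorem finite_and_ncard_setOf_eval_mul_map_eval_le {P Q : K[X]} {c d x : K} (hc : c ≠ 0)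
    (hQ : Q.natDegree ≠ 0) (hPx : P.eval x = 0) (hQx : Q.eval x ≠ 0) :
    {z | P.eval z * σ (P.eval z) = c ∧ Q.eval z * σ (Q.eval z) = d}.Finite ∧
    {z | P.eval z * σ (P.eval z) = c ∧ Q.eval z * σ (Q.eval z) = d}.ncard ≤
      2 * (P.natDegree * Q.natDegree) := by
  classical
  set E := productEliminant P (P.map σ) c Q (Q.map σ) d
  have hQσ : (Q.map σ).natDegree ≠ 0 := by rwa [natDegree_map]
  have hE : E ≠ 0 := productEliminant_ne_zero hc hQσ hPx hQx
  have subset_roots : {z | P.eval z * σ (P.eval z) = c ∧ Q.eval z * σ (Q.eval z) = d} ⊆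
      (E.roots.toFinset : Set K) := by
    rintro z ⟨hPz, hQz⟩
    rw [Finset.mem_coe, Multiset.mem_toFinset, mem_roots hE]
    exact eval_productEliminant_eq_zero (w := σ z) hQσ (by rwa [eval_map_apply])
      (by rwa [eval_map_apply])
  refine ⟨E.roots.toFinset.finite_toSet.subset subset_roots, ?_⟩
  calc _ ≤ (E.roots.toFinset : Set K).ncard :=
        Set.ncard_le_ncard subset_roots (Finset.finite_toSet _)
    _ = E.roots.toFinset.card := Set.ncard_coe_finset _
    _ ≤ E.natDegree := (Multiset.toFinset_card_le _).trans (card_roots' E)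
    _ ≤ _ := natDegree_productEliminant_le
    _ = 2 * (P.natDegree * Q.natDegree) := by rw [natDegree_map, natDegree_map]; ring

end Field

end Elimination

lemma le_prod_rpow_inv_card {ι : Type*} [Fintype ι] [Nonempty ι] {m : ι → ℝ} {c : ℝ}
    (hc : 0 ≤ c) (h : ∀ i, c ≤ m i) : c ≤ (∏ i, m i) ^ ((1 : ℝ) / Fintype.card ι) := by
  have pow_le_prod : c ^ Fintype.card ι ≤ ∏ i, m i := by
    simpa using Finset.prod_le_prod (s := Finset.univ) (fun _ _ ↦ hc) fun i _ ↦ h i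
  calc c = (c ^ Fintype.card ι) ^ ((1 : ℝ) / Fintype.card ι) := by
        rw [one_div, Real.pow_rpow_inv_natCast hc Fintype.card_ne_zero]
    _ ≤ _ := Real.rpow_le_rpow (pow_nonneg hc _) pow_le_prod (by positivity)

lemma exists_ne_mul_le_sum_mul_prod_rpow {ι : Type*} [Fintype ι] [Nontrivial ι] {m : ι → ℝ}
    (hm : ∀ i, 0 ≤ m i) :
    ∃ a b, a ≠ b ∧ m a * m b ≤ (∑ i, m i) * (∏ i, m i) ^ ((1 : ℝ) / Fintype.card ι) := by
  obtain ⟨a, ha⟩ := Finite.exists_min m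
  obtain ⟨b, hba⟩ := exists_ne a
  refine ⟨a, b, hba.symm, ?_⟩
  rw [mul_comm]
  exact mul_le_mul (Finset.single_le_sum (fun i _ ↦ hm i) (Finset.mem_univ b))
    (le_prod_rpow_inv_card (hm a) ha) (hm a) (Finset.sum_nonneg fun i _ ↦ hm i)

theorem main_theorem_complex_general {ι K : Type*} [Fintype ι] [Nontrivial ι] [Field K]
    (σ : K →+* K) {G : Set K} (hG : ∀ u ∈ G, u * σ u = 1) {g : ι → K} (hg : ∀ i, g i ≠ 0)
    {f : ι → Polynomial K} {x : ι → K} (hroot : ∀ i, (f i).eval (x i) = 0)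
    (hnonroot : ∀ i j, j ≠ i → (f j).eval (x i) ≠ 0) :
    {z | ∀ i, ∃ u ∈ G, (f i).eval z = g i * u}.Finite ∧
    ({z | ∀ i, ∃ u ∈ G, (f i).eval z = g i * u}.ncard : ℝ) ≤
      2 * ((∑ i, ((f i).natDegree : ℝ)) *
        (∏ i, ((f i).natDegree : ℝ)) ^ ((1 : ℝ) / Fintype.card ι)) := by
  obtain ⟨a, b, hab, hdeg_le⟩ :=
    exists_ne_mul_le_sum_mul_prod_rpow fun i ↦ ((f i).natDegree.cast_nonneg : (0 : ℝ) ≤ _)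
  have hb : (f b).natDegree ≠ 0 := by
    have hfb : f b ≠ 0 := fun h ↦ hnonroot a b hab.symm (by simp [h])
    exact (Polynomial.natDegree_pos_iff_degree_pos.2
      (Polynomial.degree_pos_of_root hfb (hroot b))).ne'
  obtain ⟨finite_curves, ncard_curves_le⟩ :=
    finite_and_ncard_setOf_eval_mul_map_eval_le σ (d := g b * σ (g b))
      (mul_ne_zero (hg a) ((map_ne_zero σ).2 (hg a))) hb (hroot a) (hnonroot a b hab.symm)
  have subset_curves : {z | ∀ i, ∃ u ∈ G, (f i).eval z = g i * u} ⊆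
      {z | (f a).eval z * σ ((f a).eval z) = g a * σ (g a) ∧
        (f b).eval z * σ ((f b).eval z) = g b * σ (g b)} := by
    intro z hz
    have norm_eq (i : ι) : (f i).eval z * σ ((f i).eval z) = g i * σ (g i) := by
      obtain ⟨u, hu, hfu⟩ := hz i
      rw [hfu, map_mul, mul_mul_mul_comm, hG u hu, mul_one]
    exact ⟨norm_eq a, norm_eq b⟩
  refine ⟨finite_curves.subset subset_curves, ?_⟩
  calc _ ≤ (2 * ((f a).natDegree * (f b).natDegree) : ℝ) := by
        exact_mod_cast (Set.ncard_le_ncard subset_curves finite_curves).trans ncard_curves_le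
    _ ≤ _ := by gcongr

lemma two_mul_le_four_mul_add_one_mul_rpow {n t A B e : ℝ} (hn : 0 ≤ n) (ht : 1 ≤ t) (hA : 0 ≤ A)
    (hB : 0 ≤ B) (he : 0 ≤ e) : 2 * (A * B) ≤ 4 * (n + 1) * A * B * t ^ e := by
  calc 2 * (A * B) = 2 * A * B * 1 := by ring
    _ ≤ 4 * (n + 1) * A * B * t ^ e := by
      gcongr
      exacts [by linarith, Real.one_le_rpow ht he]

/-- The complex analogue of the main theorem: a bound on the number of `x ∈ ℂ`
such that `f i (x)` lies in the coset `g i • G` of the group `G` of `t`-th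
roots of unity, for an admissible set of polynomials. -/
theorem main_theorem_complex (n t : ℕ) (hn : 2 ≤ n) (ht0 : 0 < t)
    (g : Fin n → ℂ) (hg : ∀ i, g i ≠ 0)
    (f : Fin n → Polynomial ℂ) (m : Fin n → ℕ)
    (hdeg : ∀ i, (f i).natDegree = m i) (hmono : Monotone m)
    (hadm : AdmissibleSet f)
    (ht : (2 : ℝ) ^ (2 * n) * (m ⟨n - 1, by omega⟩ : ℝ) ^ (4 * n) < t) :
    {x : ℂ | ∀ i : Fin n, ∃ u : ℂ, u ^ t = 1 ∧ (f i).eval x = g i * u}.Finite ∧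
    (Nat.card {x : ℂ | ∀ i : Fin n, ∃ u : ℂ, u ^ t = 1 ∧ (f i).eval x = g i * u} : ℝ) ≤
      4 * ((n : ℝ) + 1) * (∑ i, (m i : ℝ)) * (∏ i, (m i : ℝ)) ^ ((1 : ℝ) / n) *
        (t : ℝ) ^ ((1 : ℝ) / 2 + 1 / (2 * (n : ℝ))) := by
  obtain ⟨x, hroot, hnonroot, -⟩ := hadm
  obtain rfl : (fun i ↦ (f i).natDegree) = m := funext hdeg
  have : Nontrivial (Fin n) := Fin.nontrivial_iff_two_le.2 hn
  have mul_conj_eq_one : ∀ u ∈ {u : ℂ | u ^ t = 1}, u * starRingEnd ℂ u = 1 := fun u hu ↦ by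
    simp [Complex.mul_conj', Complex.norm_eq_one_of_pow_eq_one hu ht0.ne']
  have hM := main_theorem_complex_general (starRingEnd ℂ) mul_conj_eq_one hg hroot hnonroot
  rw [Fintype.card_fin] at hM
  exact ⟨hM.1, hM.2.trans (two_mul_le_four_mul_add_one_mul_rpow n.cast_nonneg
    (Nat.one_le_cast.2 ht0) (by positivity) (by positivity) (by positivity))⟩
end

section
/- Let p be a prime and let f_1(x), …, f_{n−1}(x) ∈ F_p[x]. Let t, A, B_1, …, B_{n−1} be positive integers, set 𝔅 = B_1⋯B_{n−1}, and for each multi-index b = (b_1, …, b_{n−1}) with 0 ≤ b_i < B_i let Q_b(x) = H_b(x) f_1(x)^{b_1 t} ⋯ f_{n−1}(x)^{b_{n−1} t} with H_b ∈ F_p[x]. Assume b_i t ≥ 𝔅 − 1 whenever b_i ≥ 1 (so the exponents below are nonnegative). Then the Wronskian determinant W(x) of the family (Q_b)_b — the 𝔅 × 𝔅 determinant whose rows are the derivatives of order 0, 1, …, 𝔅 − 1 of the Q_b — is divisible by R(x) = ∏_b f_1(x)^{max(b_1 t − 𝔅 + 1, 0)} ⋯ f_{n−1}(x)^{max(b_{n−1}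 t − 𝔅 + 1, 0)}. -/
open Polynomial

/-!
A derivation lowers the exponent of each `f i` in a product of powers of the `f i` by at most one,
so `m` applications lower it by at most `m`. In a Wronskian of order `N` every derivative taken has
order at most `N - 1`; hence all the entries of a column have a common factor, and the determinant
is divisible by the product of these factors over the columns.
-/

theorem prod_dvd_det_of_forall_dvd {n A : Type*} [Fintype n] [DecidableEq n] [CommRing A]
    {M : Matrix n n A} {v : n → A} (h : ∀ i j, v j ∣ M i j) : ∏ j, v j ∣ M.det := by
  rw [Matrix.det_apply]
  exact Finset.dvd_sum fun σ _ ↦ dvd_smul_of_dvd _ <|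
    Finset.prod_dvd_prod_of_dvd _ _ fun j _ ↦ h (σ j) j

section Derivation

variable {R A ι : Type*} [CommSemiring R] [CommSemiring A] [Algebra R A] (D : Derivation R A A)

theorem mul_dvd_derivation_mul {g₁ g₂ x₁ x₂ : A} (h₁ : g₁ ∣ x₁) (h₁' : g₁ ∣ D x₁)
    (h₂ : g₂ ∣ x₂) (h₂' : g₂ ∣ D x₂) : g₁ * g₂ ∣ D (x₁ * x₂) := by
  rw [D.leibniz, smul_eq_mul, smul_eq_mul, mul_comm x₂]
  exact dvd_add (mul_dvd_mul h₁ h₂') (mul_dvd_mul h₁' h₂)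

theorem prod_dvd_derivation_prod {s : Finset ι} {g x : ι → A} (hg : ∀ i ∈ s, g i ∣ x i)
    (hD : ∀ i ∈ s, g i ∣ D (x i)) : ∏ i ∈ s, g i ∣ D (∏ i ∈ s, x i) := by
  induction s using Finset.cons_induction with
  | empty => simp
  | cons j s hj ih =>
    rw [Finset.forall_mem_cons] at hg hD
    rw [Finset.prod_cons, Finset.prod_cons]
    exact mul_dvd_derivation_mul D hg.1 hD.1 (Finset.prod_dvd_prod_of_dvd _ _ hg.2)
      (ih hg.2 hD.2)

theorem pow_sub_one_dvd_derivation_pow (f : A) (a : ℕ) : f ^ (a - 1) ∣ D (f ^ a) := by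
  rw [D.leibniz_pow, smul_eq_mul]
  exact dvd_smul_of_dvd _ (dvd_mul_right _ _)

theorem prod_pow_sub_one_dvd_derivation {s : Finset ι} {f : ι → A} {a : ι → ℕ} {x : A}
    (hx : ∏ i ∈ s, f i ^ a i ∣ x) : ∏ i ∈ s, f i ^ (a i - 1) ∣ D x := by
  have hpow : ∀ i ∈ s, f i ^ (a i - 1) ∣ f i ^ a i := fun i _ ↦ pow_dvd_pow _ (Nat.sub_le _ _)
  obtain ⟨y, rfl⟩ := hx
  rw [D.leibniz, smul_eq_mul, smul_eq_mul]
  exact dvd_add ((Finset.prod_dvd_prod_of_dvd _ _ hpow).mul_right _)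
    ((prod_dvd_derivation_prod D hpow fun i _ ↦
      pow_sub_one_dvd_derivation_pow D (f i) (a i)).mul_left _)

theorem prod_pow_sub_dvd_iterate_derivation {s : Finset ι} {f : ι → A} {a : ι → ℕ} {x : A}
    (hx : ∏ i ∈ s, f i ^ a i ∣ x) (m : ℕ) : ∏ i ∈ s, f i ^ (a i - m) ∣ D^[m] x := by
  induction m with
  | zero => simpa using hx
  | succ m ih =>
    rw [Function.iterate_succ_apply']
    simpa only [Nat.sub_sub] using prod_pow_sub_one_dvd_derivation D ih

end Derivation

theorem wronskian_divisibility_general {R A ι β : Type*} [CommSemiring R] [CommRing A]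
    [Algebra R A] [Fintype β] (D : Derivation R A A) (s : Finset ι) (f : ι → A) (a : β → ι → ℕ)
    (H : β → A) {N : ℕ} (e : β ≃ Fin N) :
    (∏ b, ∏ i ∈ s, f i ^ (a b i - (N - 1))) ∣
      Matrix.det (Matrix.of fun r c : Fin N ↦
        D^[(r : ℕ)] (H (e.symm c) * ∏ i ∈ s, f i ^ a (e.symm c) i)) := by
  rw [← e.symm.prod_comp]
  refine prod_dvd_det_of_forall_dvd fun r c ↦ ?_
  calc ∏ i ∈ s, f i ^ (a (e.symm c) i - (N - 1))
      ∣ ∏ i ∈ s, f i ^ (a (e.symm c) i - r) :=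
        Finset.prod_dvd_prod_of_dvd _ _ fun i _ ↦ pow_dvd_pow _ (by lia)
    _ ∣ D^[(r : ℕ)] (H (e.symm c) * ∏ i ∈ s, f i ^ a (e.symm c) i) :=
        prod_pow_sub_dvd_iterate_derivation D (dvd_mul_left _ _) r

theorem coe_polynomial_derivative' {R : Type*} [CommSemiring R] :
    ⇑(derivative' : Derivation R R[X] R[X]) = derivative :=
  rfl

/-- The Wronskian `W` of the family `Q_b = H_b f_1^{b_1 t} ⋯ f_k^{b_k t}`
(multi-indices `b` with `b_i < B_i`, `𝔅 = B_1 ⋯ B_k` columns, rows given by the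
derivatives of orders `0, …, 𝔅 − 1`) is divisible by
`R = ∏_b ∏_i f_i^{max(b_i t − 𝔅 + 1, 0)}`. -/
theorem wronskian_divisibility (p k : ℕ) [Fact p.Prime]
    (f : Fin k → Polynomial (ZMod p))
    (t A : ℕ) (B : Fin k → ℕ) (ht : 0 < t) (hA : 0 < A) (hB : ∀ i, 0 < B i)
    (H : (∀ i : Fin k, Fin (B i)) → Polynomial (ZMod p))
    (𝔅 : ℕ) (h𝔅 : 𝔅 = ∏ i, B i)
    (hexp : ∀ (b : ∀ i : Fin k, Fin (B i)) (i : Fin k), 1 ≤ (b i : ℕ) →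
      𝔅 - 1 ≤ (b i : ℕ) * t)
    (e : (∀ i : Fin k, Fin (B i)) ≃ Fin 𝔅) :
    (∏ b : ∀ i : Fin k, Fin (B i), ∏ i, f i ^ ((b i : ℕ) * t - (𝔅 - 1))) ∣
      Matrix.det (Matrix.of fun (r c : Fin 𝔅) =>
        derivative^[(r : ℕ)] (H (e.symm c) * ∏ i, f i ^ (((e.symm c) i : ℕ) * t))) := by
  simpa only [coe_polynomial_derivative'] using
    wronskian_divisibility_general derivative' Finset.univ f (fun b i ↦ (b i : ℕ) * t) H e
end
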